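/- Let w : ℝ → ℝ be positive and 2n-times differentiable with the 2n-th derivative of 1/w nonnegative on ℝ, and let x₁,…,xₙ be distinct real numbers whose Fejér constants all vanish: 2·∑_{l≠k} 1/(x_k − x_l) + w'(x_k)/w(x_k) = 0 for k = 1,…,n. Then the Grünwald interpolatory system (\hat{l}_k = l_k², where l_k are the fundamental Lagrange polynomials) is w-stable: for every y₁,…,yₙ ≥ 0 and every x ∈ ℝ, 0 ≤ w(x)·∑_{k=1}^n l_k(x)²·y_k/w(x_k) ≤ max_k y_k. -/

import Mathlib

open Real Filter Set Finset

/-!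
Put `f = 1 / w`, and let `H = ∑ k, f (x k) • l k ^ 2`, a polynomial of degree less than `2 * n`.
Since `(l k)' (x k) = ∑ j ≠ k, 1 / (x k - x j)`, the vanishing of the Fejér constants says exactly
that `H' = f'` at the nodes, so that `H` is the Hermite interpolant of `f`. The error formula
`f - H = f^(2n)(z) / (2n)! * ∏ k, (· - x k) ^ 2` then gives `H ≤ f`, that is
`∑ k, w * l k ^ 2 / w (x k) ≤ 1`, and a sum of the `y k` with nonnegative weights of total at most
`1` lies between `0` and `max y`.
-/

section Rolle

variable {f : ℝ → ℝ} {s : Finset ℝ}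

theorem exists_finset_disjoint_deriv_eq_zero (hf : Continuous f) (hs : s.Nonempty) {c : ℝ}
    (hfs : ∀ a ∈ s, f a = c) :
    ∃ t : Finset ℝ, #t + 1 = #s ∧ Disjoint t s ∧ ∀ b ∈ t, deriv f b = 0 := by
  obtain ⟨m, hm⟩ := Nat.exists_eq_add_one.2 hs.card_pos
  let e := s.orderEmbOfFin hm
  have hfe (i) : f (e i) = c := hfs _ (s.orderEmbOfFin_mem hm i)
  have hrolle (i : Fin m) : ∃ b ∈ Set.Ioo (e i.castSucc) (e i.succ), deriv f b = 0 :=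
    exists_deriv_eq_zero (e.strictMono i.castSucc_lt_succ) hf.continuousOn (by rw [hfe, hfe])
  choose b hb hderiv using hrolle
  have hb_mono : StrictMono b := fun i j hij ↦ calc
    b i < e i.succ := (hb i).2
    _ ≤ e j.castSucc := e.monotone (Fin.succ_le_castSucc_iff.2 hij)
    _ < b j := (hb j).1
  have hb_ne (i) (j) : b i ≠ e j := by
    intro hij
    have hlt : i.castSucc < j := e.lt_iff_lt.1 (hij ▸ (hb i).1)
    have hgt : j < i.succ := e.lt_iff_lt.1 (hij ▸ (hb i).2)
    exact (Fin.castSucc_lt_iff_succ_le.1 hlt).not_gt hgt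
  refine ⟨univ.image b, ?_, ?_, by simpa using hderiv⟩
  · rw [card_image_of_injective _ hb_mono.injective, card_univ, Fintype.card_fin, hm]
  · rw [Finset.disjoint_left]
    intro a hab has
    obtain ⟨i, -, rfl⟩ := Finset.mem_image.1 hab
    obtain ⟨j, hj⟩ : b i ∈ Set.range e := by rwa [range_orderEmbOfFin]
    exact hb_ne i j hj.symm

theorem exists_iteratedDeriv_eq_zero {n : ℕ} (hf : ContDiff ℝ n f) (hs : n < #s)
    (hfs : ∀ a ∈ s, f a = 0) : ∃ z, iteratedDeriv n f z = 0 := by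
  induction n generalizing f s with
  | zero =>
    obtain ⟨a, ha⟩ := card_pos.1 hs
    exact ⟨a, by simpa using hfs a ha⟩
  | succ n ih =>
    obtain ⟨t, hcard, -, ht⟩ :=
      exists_finset_disjoint_deriv_eq_zero hf.continuous (card_pos.1 (by omega)) hfs
    simpa only [iteratedDeriv_succ'] using
      ih (ContDiff.deriv' (by exact_mod_cast hf)) (by omega) ht

theorem exists_iteratedDeriv_eq_zero_of_deriv_eq_zero {n : ℕ} {d : Finset ℝ}
    (hf : ContDiff ℝ n f) (hds : d ⊆ s) (hn : n < #s + #d) (hfs : ∀ a ∈ s, f a = 0)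
    (hfd : ∀ a ∈ d, deriv f a = 0) : ∃ z, iteratedDeriv n f z = 0 := by
  have hs : s.Nonempty := by
    by_contra! rfl
    simp [subset_empty.1 hds] at hn
  cases n with
  | zero =>
    obtain ⟨a, ha⟩ := hs
    exact ⟨a, by simpa using hfs a ha⟩
  | succ n =>
    -- The zeros of `deriv f` found between those of `f` avoid `s`, so those in `d` are additional.
    obtain ⟨t, hcard, hts, ht⟩ := exists_finset_disjoint_deriv_eq_zero hf.continuous hs hfs
    have hunion : #(t ∪ d) = #t + #d := card_union_of_disjoint (hts.mono_right hds)
    simpa only [iteratedDeriv_succ'] using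
      exists_iteratedDeriv_eq_zero (s := t ∪ d) (ContDiff.deriv' (by exact_mod_cast hf))
        (by omega) fun a ha ↦ (Finset.mem_union.1 ha).elim (ht a) (hfd a)

end Rolle

section Hermite

open Polynomial

theorem iterate_derivative_eq_C_of_natDegree_le {R : Type*} [Semiring R] {p : R[X]} {n : ℕ}
    (hp : p.natDegree ≤ n) : derivative^[n] p = C (n.factorial * p.coeff n) := by
  have hdegree : (derivative^[n] p).natDegree = 0 := by
    have := natDegree_iterate_derivative p n
    omega
  rw [eq_C_of_natDegree_eq_zero hdegree, coeff_iterate_derivative, zero_add,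
    Nat.descFactorial_self, nsmul_eq_mul]

theorem iteratedDeriv_polynomial_eval {𝕜 : Type*} [NontriviallyNormedField 𝕜] (p : 𝕜[X]) (n : ℕ) :
    iteratedDeriv n (fun t ↦ p.eval t) = fun t ↦ (derivative^[n] p).eval t := by
  induction n generalizing p with
  | zero => simp
  | succ n ih =>
    have hderiv : (deriv fun t ↦ p.eval t) = fun t ↦ p.derivative.eval t := by
      ext t
      exact p.deriv
    rw [iteratedDeriv_succ', hderiv, ih, Function.iterate_succ_apply]

theorem iteratedDeriv_eval_add_C_mul_of_monic {𝕜 : Type*} [NontriviallyNormedField 𝕜] {n : ℕ}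
    {p q : 𝕜[X]} (hp : p.degree < n) (hq : q.Monic) (hqn : q.natDegree = n) (c z : 𝕜) :
    iteratedDeriv n (fun t ↦ (p + C c * q).eval t) z = n.factorial * c := by
  subst hqn
  have hq_deriv : derivative^[q.natDegree] q = C (q.natDegree.factorial : 𝕜) := by
    rw [iterate_derivative_eq_C_of_natDegree_le le_rfl, hq.coeff_natDegree, mul_one]
  rw [iteratedDeriv_polynomial_eval, iterate_map_add,
    iterate_derivative_eq_zero_of_degree_lt hp, iterate_derivative_C_mul, hq_deriv]
  simp [mul_comm]

variable {ι : Type*} {s : Finset ι} {v : ι → ℝ} {f : ℝ → ℝ} {p : ℝ[X]}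

theorem exists_sub_eval_eq_iteratedDeriv_mul_sq_nodal (hv : Set.InjOn v s)
    (hf : ContDiff ℝ (2 * #s : ℕ) f) (hp : p.degree < (2 * #s : ℕ))
    (heval : ∀ i ∈ s, p.eval (v i) = f (v i))
    (hderiv : ∀ i ∈ s, p.derivative.eval (v i) = deriv f (v i)) (t : ℝ) :
    ∃ z, f t - p.eval t = iteratedDeriv (2 * #s) f z / (2 * #s).factorial *
      (Lagrange.nodal s v).eval t ^ 2 := by
  classical
  set M := Lagrange.nodal s v
  have hM_node {i} (hi : i ∈ s) : M.eval (v i) = 0 := Lagrange.eval_nodal_at_node hi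
  by_cases ht : t ∈ s.image v
  · obtain ⟨i, hi, rfl⟩ := Finset.mem_image.1 ht
    exact ⟨v i, by simp [heval i hi, hM_node hi]⟩
  have hMt : M.eval t ≠ 0 :=
    Lagrange.eval_nodal_not_at_node fun i hi h ↦ ht (h ▸ mem_image_of_mem v hi)
  -- Adding `c * M ^ 2` to `p` keeps the double zeros of the error and creates one more at `t`.
  obtain ⟨c, hc⟩ : ∃ c, f t - p.eval t = c * M.eval t ^ 2 :=
    ⟨_, (div_mul_cancel₀ _ (by positivity)).symm⟩
  set q : ℝ[X] := p + C c * M ^ 2 with hq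
  have hq_diff : ContDiff ℝ (2 * #s : ℕ) fun u ↦ q.eval u := by
    simpa using q.contDiff_aeval (𝕜 := ℝ) (2 * #s : ℕ)
  have hzero : ∀ a ∈ insert t (s.image v), f a - q.eval a = 0 := by
    simp only [Finset.forall_mem_insert, Finset.forall_mem_image, hq, eval_add, eval_mul, eval_C,
      eval_pow]
    exact ⟨by rw [← hc]; ring, fun i hi ↦ by simp [heval i hi, hM_node hi]⟩
  have hzero_deriv : ∀ a ∈ s.image v, deriv (fun u ↦ f u - q.eval u) a = 0 := by
    refine Finset.forall_mem_image.2 fun i hi ↦ ?_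
    have hcard : 2 * #s ≠ 0 := by simpa using ne_empty_of_mem hi
    rw [deriv_fun_sub (hf.differentiable (by exact_mod_cast hcard) _) q.differentiableAt, q.deriv,
      ← hderiv i hi]
    simp [hq, derivative_pow, hM_node hi]
  have hcard : #(s.image v) = #s := card_image_of_injOn hv
  have hM_degree : (M ^ 2).natDegree = 2 * #s := by
    rw [Lagrange.nodal_monic.natDegree_pow, Lagrange.natDegree_nodal]
  obtain ⟨z, hz⟩ := exists_iteratedDeriv_eq_zero_of_deriv_eq_zero (hf.sub hq_diff)
    (subset_insert t _) (by rw [card_insert_of_notMem ht]; omega) hzero hzero_deriv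
  rw [iteratedDeriv_fun_sub hf.contDiffAt hq_diff.contDiffAt, sub_eq_zero,
    iteratedDeriv_eval_add_C_mul_of_monic hp (Lagrange.nodal_monic.pow 2) hM_degree] at hz
  exact ⟨z, by rw [hc, hz]; field_simp⟩

theorem eval_le_of_iteratedDeriv_nonneg (hv : Set.InjOn v s) (hf : ContDiff ℝ (2 * #s : ℕ) f)
    (hf_nonneg : ∀ u, 0 ≤ iteratedDeriv (2 * #s) f u) (hp : p.degree < (2 * #s : ℕ))
    (heval : ∀ i ∈ s, p.eval (v i) = f (v i))
    (hderiv : ∀ i ∈ s, p.derivative.eval (v i) = deriv f (v i)) (t : ℝ) : p.eval t ≤ f t := by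
  obtain ⟨z, hz⟩ := exists_sub_eval_eq_iteratedDeriv_mul_sq_nodal hv hf hp heval hderiv t
  refine sub_nonneg.1 (hz ▸ ?_)
  have := hf_nonneg z
  positivity

end Hermite

section Grunwald

open Polynomial

variable {ι F : Type*} [DecidableEq ι] [Field F] {s : Finset ι} {v : ι → F} {i : ι}

theorem eval_lagrange_basis (t : F) :
    (Lagrange.basis s v i).eval t = ∏ j ∈ s.erase i, (t - v j) / (v i - v j) := by
  simp [Lagrange.basis, Lagrange.basisDivisor, eval_prod, div_eq_inv_mul]

theorem eval_derivative_lagrange_basis_self (hv : Set.InjOn v s) (hi : i ∈ s) :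
    (Lagrange.basis s v i).derivative.eval (v i) = ∑ j ∈ s.erase i, 1 / (v i - v j) := by
  have hone {j} (hj : j ∈ s.erase i) : (Lagrange.basisDivisor (v i) (v j)).eval (v i) = 1 :=
    Lagrange.eval_basisDivisor_left_of_ne
      (hv.ne hi (mem_of_mem_erase hj) (ne_of_mem_erase hj).symm)
  simp only [Lagrange.basis, derivative_prod_finset, eval_finsetSum, eval_mul, eval_prod]
  refine sum_congr rfl fun j _ ↦ ?_
  rw [prod_eq_one fun k hk ↦ hone (mem_of_mem_erase hk), one_mul]
  simp [Lagrange.basisDivisor]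

/-- The Grünwald interpolant `∑ i ∈ s, r i * l i ^ 2` of the values `r` at the nodes `v`, where the
`l i` are the fundamental Lagrange polynomials. -/
noncomputable def grunwaldInterpolant (s : Finset ι) (v r : ι → F) : F[X] :=
  ∑ i ∈ s, C (r i) * Lagrange.basis s v i ^ 2

variable (r : ι → F)

theorem eval_grunwaldInterpolant (t : F) :
    (grunwaldInterpolant s v r).eval t = ∑ i ∈ s, r i * (Lagrange.basis s v i).eval t ^ 2 := by
  simp [grunwaldInterpolant, eval_finsetSum]

theorem eval_grunwaldInterpolant_node (hv : Set.InjOn v s) (hi : i ∈ s) :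
    (grunwaldInterpolant s v r).eval (v i) = r i := by
  rw [eval_grunwaldInterpolant, sum_eq_single_of_mem i hi fun j _ hj ↦ by
    simp [Lagrange.eval_basis_of_ne hj hi]]
  simp [Lagrange.eval_basis_self hv hi]

theorem eval_derivative_grunwaldInterpolant_node (hv : Set.InjOn v s) (hi : i ∈ s) :
    (grunwaldInterpolant s v r).derivative.eval (v i) =
      r i * (2 * ∑ j ∈ s.erase i, 1 / (v i - v j)) := by
  rw [grunwaldInterpolant, derivative_sum, eval_finsetSum, sum_eq_single_of_mem i hi fun j _ hj ↦ by
    simp [derivative_pow, Lagrange.eval_basis_of_ne hj hi]]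
  simp [derivative_pow, Lagrange.eval_basis_self hv hi, eval_derivative_lagrange_basis_self hv hi]

theorem degree_grunwaldInterpolant_lt (hv : Set.InjOn v s) :
    (grunwaldInterpolant s v r).degree < (2 * #s : ℕ) := by
  refine (degree_sum_le _ _).trans_lt ((Finset.sup_lt_iff (WithBot.bot_lt_coe _)).2 fun i hi ↦ ?_)
  have hnatDegree : (C (r i) * Lagrange.basis s v i ^ 2).natDegree ≤ 2 * (#s - 1) := by
    rw [← Lagrange.natDegree_basis hv hi]
    exact (natDegree_C_mul_le _ _).trans natDegree_pow_le
  have hcard : 0 < #s := card_pos.2 ⟨i, hi⟩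
  exact degree_le_natDegree.trans_lt (by exact_mod_cast (by omega))

end Grunwald

section WeightedStability

variable {ι : Type*} [DecidableEq ι] {s : Finset ι}

/-- The Fejér constant `C_{i,w}` of the weight `w` at `v i`, for the nodes `v j` with `j ∈ s`. Up to
the factor `1 / w (v i)`, it is the error in the derivative at `v i` when `1 / w` is replaced by its
Grünwald interpolant. -/
noncomputable def fejerConstant {𝕜 : Type*} [NontriviallyNormedField 𝕜] (s : Finset ι) (v : ι → 𝕜)
    (w : 𝕜 → 𝕜) (i : ι) : 𝕜 :=
  2 * ∑ j ∈ s.erase i, 1 / (v i - v j) + deriv w (v i) / w (v i)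

theorem eval_derivative_grunwaldInterpolant_one_div_node {𝕜 : Type*} [NontriviallyNormedField 𝕜]
    {v : ι → 𝕜} {w : 𝕜 → 𝕜} {i : ι} (hv : Set.InjOn v s) (hi : i ∈ s)
    (hw : DifferentiableAt 𝕜 w (v i)) (hwi : w (v i) ≠ 0) :
    (grunwaldInterpolant s v fun j ↦ 1 / w (v j)).derivative.eval (v i) =
      deriv (fun u ↦ 1 / w u) (v i) + fejerConstant s v w i / w (v i) := by
  simp only [eval_derivative_grunwaldInterpolant_node _ hv hi, fejerConstant, one_div,
    deriv_fun_inv'' hw hwi]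
  field_simp
  ring

theorem eval_grunwaldInterpolant_one_div_le {v : ι → ℝ} {w : ℝ → ℝ} (hw_ne : ∀ u, w u ≠ 0)
    (hw : ContDiff ℝ (2 * #s : ℕ) w)
    (hw_nonneg : ∀ u, 0 ≤ iteratedDeriv (2 * #s) (fun u ↦ 1 / w u) u)
    (hv : Set.InjOn v s) (hfejer : ∀ i ∈ s, fejerConstant s v w i = 0) (t : ℝ) :
    (grunwaldInterpolant s v fun i ↦ 1 / w (v i)).eval t ≤ 1 / w t := by
  refine eval_le_of_iteratedDeriv_nonneg hv (f := fun u ↦ 1 / w u)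
    (contDiff_const.div hw hw_ne) hw_nonneg (degree_grunwaldInterpolant_lt _ hv)
    (fun i hi ↦ eval_grunwaldInterpolant_node _ hv hi) (fun i hi ↦ ?_) t
  have hcard : 2 * #s ≠ 0 := by simpa using ne_empty_of_mem hi
  have hwi : DifferentiableAt ℝ w (v i) := hw.differentiable (by exact_mod_cast hcard) _
  rw [eval_derivative_grunwaldInterpolant_one_div_node hv hi hwi (hw_ne _), hfejer i hi,
    zero_div, add_zero]

end WeightedStability

theorem sum_mul_le_of_sum_le_one {ι R : Type*} [Semiring R] [PartialOrder R] [IsOrderedRing R]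
    {s : Finset ι} {a y : ι → R} {b : R} (ha : ∀ i ∈ s, 0 ≤ a i) (ha_sum : ∑ i ∈ s, a i ≤ 1)
    (hb : 0 ≤ b) (hy : ∀ i ∈ s, y i ≤ b) : ∑ i ∈ s, a i * y i ≤ b := calc
  ∑ i ∈ s, a i * y i ≤ ∑ i ∈ s, a i * b :=
    sum_le_sum fun i hi ↦ mul_le_mul_of_nonneg_left (hy i hi) (ha i hi)
  _ = (∑ i ∈ s, a i) * b := (sum_mul _ _ _).symm
  _ ≤ b := mul_le_of_le_one_left hb ha_sum

/-- Let `w` be positive and `2n`-times differentiable with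
`(1/w)^{(2n)} ≥ 0` on `ℝ`, and let `x₁,…,xₙ` be distinct nodes with vanishing Fejér
constants. Then the Grünwald interpolatory system `l̂ₖ = lₖ²` is `w`-stable: for all
nonnegative `y₁,…,yₙ` and all real `x`,
`0 ≤ w(x)·∑ₖ lₖ(x)²·yₖ/w(xₖ) ≤ maxₖ yₖ`. -/
theorem grunwald_system_w_stable
    (w : ℝ → ℝ) (hw_pos : ∀ x, 0 < w x)
    (n : ℕ) (hn : 0 < n) (hw_smooth : ContDiff ℝ (2 * n : ℕ) w)
    (hnn : ∀ x : ℝ, 0 ≤ iteratedDeriv (2 * n) (fun t => 1 / w t) x)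
    (x : Fin n → ℝ) (hinj : Function.Injective x)
    (l : Fin n → ℝ → ℝ)
    (hl : ∀ k t, l k t = ∏ j ∈ Finset.univ.erase k, (t - x j) / (x k - x j))
    (hfejer : ∀ k : Fin n,
      2 * ∑ j ∈ Finset.univ.erase k, 1 / (x k - x j) + deriv w (x k) / w (x k) = 0) :
    ∀ y : Fin n → ℝ, (∀ k, 0 ≤ y k) → ∀ t : ℝ,
      0 ≤ w t * ∑ k, (l k t) ^ 2 * y k / w (x k) ∧
      w t * ∑ k, (l k t) ^ 2 * y k / w (x k) ≤
        Finset.univ.sup' ⟨⟨0, by omega⟩, Finset.mem_univ _⟩ y := by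
  intro y hy t
  set a : Fin n → ℝ := fun k ↦ w t * (l k t ^ 2 / w (x k)) with ha
  have ha_nonneg (k) : 0 ≤ a k :=
    mul_nonneg (hw_pos t).le (div_nonneg (sq_nonneg _) (hw_pos _).le)
  have hl_basis (k) : l k t = (Lagrange.basis univ x k).eval t := by
    rw [hl, eval_lagrange_basis]
  have ha_sum : ∑ k, a k ≤ 1 := by
    have hle := eval_grunwaldInterpolant_one_div_le (s := univ) (fun u ↦ (hw_pos u).ne')
      (by simpa using hw_smooth) (by simpa using hnn) hinj.injOn (fun k _ ↦ hfejer k) t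
    rw [le_div_iff₀' (hw_pos t), eval_grunwaldInterpolant, mul_sum] at hle
    simpa only [ha, hl_basis, one_div_mul_eq_div] using hle
  have hsum : w t * ∑ k, l k t ^ 2 * y k / w (x k) = ∑ k, a k * y k := by
    rw [mul_sum]
    exact sum_congr rfl fun k _ ↦ by ring
  rw [hsum]
  have hy_le (k) : y k ≤ univ.sup' ⟨⟨0, hn⟩, mem_univ _⟩ y := le_sup' y (mem_univ k)
  exact ⟨sum_nonneg fun k _ ↦ mul_nonneg (ha_nonneg k) (hy k),
    sum_mul_le_of_sum_le_one (fun k _ ↦ ha_nonneg k) ha_sum ((hy ⟨0, hn⟩).trans (hy_le _))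
      fun k _ ↦ hy_le k⟩
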